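/- Let N be odd, m = (N−1)/2, and 1 ≤ j ≤ m. Then the linear interpolation (prolongation) of the coarse-grid sine mode v_j^H is I_H^h v_j^H = cos²(jπh/2)·v_j − sin²(jπh/2)·v_{N+1−j}, where I_H^h = 2·(I_h^H)ᵀ; explicitly, (I_H^h w)_{2i} = w_i and (I_H^h w)_{2i±1} = (w_i + w_{i±1})/2 with the conventions w_0 = w_{m+1} = 0. -/

import Mathlib

open Real


open Real

/-- Mesh size `h = 1/(N+1)` for `N = 2m+1` interior fine-grid points. -/
noncomputable def meshH (m : ℕ) : ℝ := 1 / (2 * m + 2)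

/-- The full-weighting restriction operator `I_h^H : ℝ^N → ℝ^m`, `N = 2m+1`:
`(I_h^H u)_i = (u_{2i-1} + 2u_{2i} + u_{2i+1})/4` for `i = 1, …, m` (1-based indices;
the `Fin` element with value `t` represents the 1-based index `t+1`). -/
noncomputable def fullWeighting (m : ℕ) (u : Fin (2 * m + 1) → ℝ) : Fin m → ℝ :=
  fun i =>
    (u ⟨2 * i.1, by omega⟩ + 2 * u ⟨2 * i.1 + 1, by omega⟩ + u ⟨2 * i.1 + 2, by omega⟩) / 4

/-- The fine-grid sine mode `v_j` with entries `(v_j)_i = sin(i j π h)`, `i = 1, …, N`. -/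
noncomputable def fineSine (m : ℕ) (j : ℕ) : Fin (2 * m + 1) → ℝ :=
  fun i => Real.sin ((i.1 + 1) * j * π * meshH m)

/-- The coarse-grid sine mode `v_j^H` with entries `(v_j^H)_i = sin(2 i j π h)`,
`i = 1, …, m`. -/
noncomputable def coarseSine (m : ℕ) (j : ℕ) : Fin m → ℝ :=
  fun i => Real.sin (2 * (i.1 + 1) * j * π * meshH m)


/-- The linear-interpolation prolongation operator `I_H^h : ℝ^m → ℝ^N`, `N = 2m+1`:
`(I_H^h w)_{2i} = w_i` and `(I_H^h w)_{2i±1} = (w_i + w_{i±1})/2` (1-based indices),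
with the conventions `w_0 = w_{m+1} = 0`. -/
noncomputable def prolong (m : ℕ) (w : Fin m → ℝ) : Fin (2 * m + 1) → ℝ :=
  fun i =>
    let we : ℕ → ℝ := fun t => if h : 1 ≤ t ∧ t ≤ m then w ⟨t - 1, by omega⟩ else 0
    if (i.1 + 1) % 2 = 0 then we ((i.1 + 1) / 2)
    else (we (i.1 / 2) + we (i.1 / 2 + 1)) / 2

/-!
The transpose relation holds because each `w_i` contributes to the fine node `2 i` with weight `1`
and to its two neighbours with weight `1 / 2`.

Put `θ = j π h`. Since `2 (m + 1) θ = j π`, the zero extension of `v_j^H` to the boundary nodes `0`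
and `m + 1` still samples `sin (2 t θ)`. Hence interpolation reproduces `v_j` at the coarse nodes
and, by `(sin (x - θ) + sin (x + θ)) / 2 = cos θ sin x`, multiplies it by `cos θ` at the midpoints.
As `v_{N+1-j}` equals `-v_j` at the coarse nodes and `v_j` at the midpoints, the claim reduces to
`cos² (θ / 2) + sin² (θ / 2) = 1` and `cos² (θ / 2) - sin² (θ / 2) = cos θ`.
-/

theorem sum_fin_two_mul_add_one {M : Type*} [AddCommMonoid M] {m : ℕ} (f : Fin (2 * m + 1) → M) :
    ∑ i, f i =
      ∑ k : Fin (m + 1), f ⟨2 * k, by omega⟩ + ∑ k : Fin m, f ⟨2 * k + 1, by omega⟩ := by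
  induction m with
  | zero => simp
  | succ m ih =>
    calc ∑ i, f i
      _ = ∑ i : Fin (2 * m + 2), f i.castSucc + f ⟨2 * m + 2, by omega⟩ :=
        Fin.sum_univ_castSucc f
      _ = ∑ i : Fin (2 * m + 1), f ⟨i, by omega⟩ + f ⟨2 * m + 1, by omega⟩ +
            f ⟨2 * m + 2, by omega⟩ :=
        congrArg (· + _) (Fin.sum_univ_castSucc (n := 2 * m + 1) _)
      _ = (∑ k : Fin (m + 1), f ⟨2 * k, by omega⟩ + f ⟨2 * m + 2, by omega⟩) +
            (∑ k : Fin m, f ⟨2 * k + 1, by omega⟩ + f ⟨2 * m + 1, by omega⟩) := by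
        rw [ih, add_assoc, add_comm (f _) (f _), add_add_add_comm]
      _ = _ :=
        congrArg₂ (· + ·)
          (Fin.sum_univ_castSucc fun k : Fin (m + 2) => f ⟨2 * k, by omega⟩).symm
          (Fin.sum_univ_castSucc fun k : Fin (m + 1) => f ⟨2 * k + 1, by omega⟩).symm

section ZeroExtension

variable {m : ℕ} (w : Fin m → ℝ)

/-- The coarse-grid function `w` on the nodes `1, …, m` (node `t + 1` being `t : Fin m`), extended
by zero to all of `ℕ`; the values at `0` and `m + 1` are the boundary values `w_0 = w_{m+1} = 0`. -/
noncomputable def zeroExtension (t : ℕ) : ℝ :=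
  if h : 1 ≤ t ∧ t ≤ m then w ⟨t - 1, by omega⟩ else 0

theorem zeroExtension_zero : zeroExtension w 0 = 0 := by
  simp [zeroExtension]

theorem zeroExtension_right_boundary : zeroExtension w (m + 1) = 0 := by
  simp [zeroExtension]

theorem zeroExtension_add_one (i : Fin m) : zeroExtension w (i + 1) = w i :=
  dif_pos (by omega)

theorem prolong_two_mul (k : Fin (m + 1)) :
    prolong m w ⟨2 * k, by omega⟩ = (zeroExtension w k + zeroExtension w (k + 1)) / 2 := by
  have midpoint : ¬ (2 * k.1 + 1) % 2 = 0 := by omega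
  have half : 2 * k.1 / 2 = k := by omega
  simp only [prolong, if_neg midpoint, half, zeroExtension]

theorem prolong_two_mul_add_one (k : Fin m) : prolong m w ⟨2 * k + 1, by omega⟩ = w k := by
  have coarse : (2 * k.1 + 1 + 1) % 2 = 0 := by omega
  have half : (2 * k.1 + 1 + 1) / 2 = k + 1 := by omega
  simp only [prolong, if_pos coarse, half]
  exact zeroExtension_add_one w k

theorem sum_prolong_mul (u : Fin (2 * m + 1) → ℝ) :
    ∑ i, prolong m w i * u i = 2 * ∑ i, w i * fullWeighting m u i := by
  have left : ∑ k : Fin (m + 1), zeroExtension w k * u ⟨2 * k, by omega⟩ =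
      ∑ k : Fin m, w k * u ⟨2 * k + 2, by omega⟩ := by
    rw [Fin.sum_univ_succ]
    simp [zeroExtension_zero, zeroExtension_add_one, mul_add]
  have right : ∑ k : Fin (m + 1), zeroExtension w (k + 1) * u ⟨2 * k, by omega⟩ =
      ∑ k : Fin m, w k * u ⟨2 * k, by omega⟩ := by
    rw [Fin.sum_univ_castSucc]
    simp [zeroExtension_right_boundary, zeroExtension_add_one]
  calc ∑ i, prolong m w i * u i
      = (∑ k : Fin (m + 1), zeroExtension w k * u ⟨2 * k, by omega⟩ +
          ∑ k : Fin (m + 1), zeroExtension w (k + 1) * u ⟨2 * k, by omega⟩) / 2 +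
          ∑ k : Fin m, w k * u ⟨2 * k + 1, by omega⟩ := by
        simp only [sum_fin_two_mul_add_one, prolong_two_mul, prolong_two_mul_add_one,
          ← Finset.sum_add_distrib, Finset.sum_div]
        congr! 2
        ring
    _ = 2 * ∑ i, w i * fullWeighting m u i := by
        simp only [left, right, fullWeighting, ← Finset.sum_add_distrib, Finset.sum_div,
          Finset.mul_sum]
        congr! 1
        ring

end ZeroExtension

section SineModes

variable {m j : ℕ}

theorem two_mul_add_two_mul_meshH (m : ℕ) : (2 * m + 2) * meshH m = 1 :=
  mul_one_div_cancel (by positivity)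

theorem zeroExtension_coarseSine {t : ℕ} (ht : t ≤ m + 1) :
    zeroExtension (coarseSine m j) t = sin (2 * t * j * π * meshH m) := by
  rcases t with _ | s
  · simp [zeroExtension_zero]
  rcases (Nat.le_of_succ_le_succ ht).lt_or_eq with hs | rfl
  · rw [zeroExtension_add_one _ ⟨s, hs⟩]
    simp [coarseSine]
  · have angle : 2 * ((s + 1 : ℕ) : ℝ) * j * π * meshH s = j * π := by
      push_cast
      linear_combination j * π * two_mul_add_two_mul_meshH s
    rw [zeroExtension_right_boundary, angle, sin_nat_mul_pi]

theorem fineSine_two_mul_add_two_sub (hj : j ≤ 2 * m + 2) (i : Fin (2 * m + 1)) :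
    fineSine m (2 * m + 2 - j) i = (-1) ^ (i : ℕ) * fineSine m j i := by
  have angle : ((i : ℝ) + 1) * ((2 * m + 2 - j : ℕ) : ℝ) * π * meshH m =
      ((i + 1 : ℕ) : ℝ) * π - (i + 1) * j * π * meshH m := by
    push_cast [Nat.cast_sub hj]
    linear_combination (i + 1) * π * two_mul_add_two_mul_meshH m
  rw [fineSine, angle, sin_nat_mul_pi_sub, fineSine]
  ring

theorem prolong_coarseSine_two_mul (k : Fin (m + 1)) :
    prolong m (coarseSine m j) ⟨2 * k, by omega⟩ =
      cos (j * π * meshH m) * fineSine m j ⟨2 * k, by omega⟩ := by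
  have left : (2 * k * j * π * meshH m : ℝ) =
      ((2 * k : ℕ) + 1) * j * π * meshH m - j * π * meshH m := by
    push_cast
    ring
  have right : (2 * (k + 1 : ℕ) * j * π * meshH m : ℝ) =
      ((2 * k : ℕ) + 1) * j * π * meshH m + j * π * meshH m := by
    push_cast
    ring
  rw [prolong_two_mul, zeroExtension_coarseSine (by omega), zeroExtension_coarseSine (by omega),
    left, right, ← two_mul_sin_mul_cos, fineSine]
  ring

theorem prolong_coarseSine_two_mul_add_one (k : Fin m) :
    prolong m (coarseSine m j) ⟨2 * k + 1, by omega⟩ = fineSine m j ⟨2 * k + 1, by omega⟩ := by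
  rw [prolong_two_mul_add_one, coarseSine, fineSine]
  push_cast
  ring_nf

theorem prolong_coarseSine (hj : j ≤ 2 * m + 2) :
    prolong m (coarseSine m j) =
      cos (j * π * meshH m / 2) ^ 2 • fineSine m j -
        sin (j * π * meshH m / 2) ^ 2 • fineSine m (2 * m + 2 - j) := by
  have cos_eq : cos (j * π * meshH m) =
      cos (j * π * meshH m / 2) ^ 2 - sin (j * π * meshH m / 2) ^ 2 := by
    rw [← cos_two_mul', mul_div_cancel₀ _ two_ne_zero]
  ext ⟨i, hi⟩
  simp only [Pi.sub_apply, Pi.smul_apply, smul_eq_mul, fineSine_two_mul_add_two_sub hj]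
  obtain ⟨k, rfl | rfl⟩ := i.even_or_odd'
  · rw [prolong_coarseSine_two_mul ⟨k, by omega⟩, cos_eq, (even_two_mul k).neg_one_pow]
    ring
  · rw [prolong_coarseSine_two_mul_add_one ⟨k, by omega⟩, (odd_two_mul_add_one k).neg_one_pow]
    linear_combination -fineSine m j ⟨2 * k + 1, hi⟩ * sin_sq_add_cos_sq (j * π * meshH m / 2)

end SineModes

theorem stmt18_general (m j : ℕ) (hj : j ≤ 2 * m + 2) :
    (∀ (w : Fin m → ℝ) (u : Fin (2 * m + 1) → ℝ),
      ∑ i : Fin (2 * m + 1), prolong m w i * u i =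
        2 * ∑ i : Fin m, w i * fullWeighting m u i) ∧
    prolong m (coarseSine m j) =
      cos (j * π * meshH m / 2) ^ 2 • fineSine m j -
        sin (j * π * meshH m / 2) ^ 2 • fineSine m (2 * m + 2 - j) :=
  ⟨sum_prolong_mul, prolong_coarseSine hj⟩

/-- Let `N = 2m+1` be odd and `1 ≤ j ≤ m`.  The prolongation `I_H^h` satisfies
`I_H^h = 2·(I_h^H)ᵀ` (as bilinear forms), and the linear interpolation of the
coarse-grid sine mode `v_j^H` is
`I_H^h v_j^H = cos²(jπh/2)·v_j − sin²(jπh/2)·v_{N+1−j}`. -/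
theorem stmt18 (m : ℕ) (hm : 0 < m) (j : ℕ) (hj1 : 1 ≤ j) (hjm : j ≤ m) :
    (∀ (w : Fin m → ℝ) (u : Fin (2 * m + 1) → ℝ),
      ∑ i : Fin (2 * m + 1), prolong m w i * u i =
        2 * ∑ i : Fin m, w i * fullWeighting m u i) ∧
    prolong m (coarseSine m j) =
      Real.cos (j * π * meshH m / 2) ^ 2 • fineSine m j -
        Real.sin (j * π * meshH m / 2) ^ 2 • fineSine m (2 * m + 2 - j) :=
  stmt18_general m j (by omega)
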